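/- Let (T(t))_{t≥0} be a C₀-semigroup on a complex Banach space X with ‖T(t)‖ ≤ M for all t ≥ 0, where M ≥ 1, and suppose there exists 0 < ε ≤ 2 such that ‖T(t) − I‖ ≤ 2 − ε for all t > 0. Then the map t ↦ T(t) is differentiable in operator norm on (0,∞), and there is a universal constant c > 0 such that sup_{t>0} ‖t·T′(t)‖ ≤ c · (M⁴/ε²) · (1 + log(M/ε)). -/

import Mathlib

open Filter Topology

universe u

/-- A strongly continuous one-parameter semigroup of bounded operators on a complex
Banach space. -/
def IsC0Semigroup {X : Type u} [NormedAddCommGroup X] [NormedSpace ℂ X]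
    (T : ℝ → X →L[ℂ] X) : Prop :=
  T 0 = 1 ∧ (∀ s t : ℝ, 0 ≤ s → 0 ≤ t → T (s + t) = (T s).comp (T t)) ∧
    ∀ x : X, Tendsto (fun t => T t x) (nhdsWithin 0 (Set.Ioi 0)) (nhds x)

/-!
Let `R(l) = ∫₀^∞ e^{-lr} T(r) dr` for `Re l > 0`. At the half period `τ = π / |Im l|` the
exponential `e^{-lτ}` is `-q` with `0 < q ≤ 1`, hence `(1 + q T(τ)) R(l) = ∫₀^τ e^{-lr} T(r) dr`.
The bound `‖T(τ) - 1‖ ≤ 2 - ε` makes `1 + q T(τ)` bounded below by `ε / 2`, so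
`|Im l| ‖R(l)‖ ≤ 2πM / ε`.
The moment `∫₀^∞ r² e^{-lr} T(r) dr = 2 R(l)³` then decays like `|Im l|⁻³` on the line
`Re l = a`, so its inverse Fourier transform, which is `t² e^{-at} T(t)`, converges and can be
differentiated in operator norm. The choice `a = 1 / t` gives `‖t T'(t)‖ ≤ 220 M³ / ε²`.
-/

open MeasureTheory Set

open scoped FourierTransform Real

lemma pow_mul_le_of_exponent_le {x y A : ℝ} {j n : ℕ} (hx : 0 ≤ x) (hy : 0 ≤ y) (hA : y ≤ A)
    (hn : x ^ n * y ≤ A) (hj : j ≤ n) : x ^ j * y ≤ A := by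
  rcases le_total x 1 with hx₁ | hx₁
  · exact (mul_le_of_le_one_left hy (pow_le_one₀ hx hx₁)).trans hA
  · exact (mul_le_mul_of_nonneg_right (pow_le_pow_right₀ hx₁ hj) hy).trans hn

section Fourier

variable {E F : Type*} [NormedAddCommGroup E] [NormedSpace ℂ E] [NormedAddCommGroup F]
  [NormedSpace ℂ F]

lemma norm_fourierInv_le_integral_norm (f : ℝ → E) (t : ℝ) : ‖𝓕⁻ f t‖ ≤ ∫ w, ‖f w‖ := by
  rw [Real.fourierInv_eq]
  refine (norm_integral_le_integral_norm _).trans_eq ?_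
  simp only [Circle.norm_smul]

lemma fourierInv_continuousLinearMap_apply {f : ℝ → E →L[ℂ] F} (hf : Integrable f) (t : ℝ)
    (x : E) : 𝓕⁻ f t x = 𝓕⁻ (fun w => f w x) t := by
  rw [Real.fourierInv_eq_fourier_neg, Real.fourierInv_eq_fourier_neg, Real.fourier_eq,
    Real.fourier_eq, ContinuousLinearMap.integral_apply]
  · rfl
  · exact (Real.fourierIntegral_convergent_iff _).2 hf

lemma hasDerivAt_fourierInv {f : ℝ → E} (hf : Integrable f)
    (hf' : Integrable fun w : ℝ => (2 * π * Complex.I * w) • f w) (t : ℝ) :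
    HasDerivAt (𝓕⁻ f) (𝓕⁻ (fun w : ℝ => (2 * π * Complex.I * w) • f w) t) t := by
  have hsmul : Integrable fun w : ℝ => w • f w := by
    refine (hf'.smul (2 * π * Complex.I : ℂ)⁻¹).congr (Eventually.of_forall fun w => ?_)
    simp only [Pi.smul_apply, smul_smul]
    rw [inv_mul_cancel_left₀ Complex.two_pi_I_ne_zero, Complex.coe_smul]
  have hderiv := (Real.hasDerivAt_fourier hf hsmul (-t)).scomp t (hasDerivAt_neg t)
  have hneg : 𝓕⁻ f = 𝓕 f ∘ Neg.neg := funext fun s => Real.fourierInv_eq_fourier_neg f s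
  rw [hneg, Real.fourierInv_eq_fourier_neg]
  convert hderiv using 1
  rw [neg_one_smul, Real.fourier_eq, Real.fourier_eq, ← integral_neg]
  simp only [neg_mul, neg_smul, smul_neg, neg_neg]

end Fourier

section Kernel

/-- The kernel `r ↦ rⁿ e^{-lr}` of the `n`-th moment of the Laplace transform. -/
noncomputable def laplaceKernel (n : ℕ) (l : ℂ) (r : ℝ) : ℂ :=
  (r : ℂ) ^ n * Complex.exp (-(l * r))

lemma norm_laplaceKernel (n : ℕ) (l : ℂ) {r : ℝ} (hr : 0 ≤ r) :
    ‖laplaceKernel n l r‖ = r ^ n * Real.exp (-(l.re * r)) := by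
  simp [laplaceKernel, Complex.norm_exp, abs_of_nonneg hr]

lemma continuous_laplaceKernel (n : ℕ) (l : ℂ) : Continuous (laplaceKernel n l) := by
  unfold laplaceKernel
  fun_prop

lemma laplaceKernel_ne_zero (n : ℕ) (l : ℂ) {r : ℝ} (hr : r ≠ 0) : laplaceKernel n l r ≠ 0 :=
  mul_ne_zero (pow_ne_zero n (Complex.ofReal_ne_zero.2 hr)) (Complex.exp_ne_zero _)

lemma hasDerivAt_laplaceKernel (n : ℕ) (l : ℂ) {r : ℝ} (hr : r ≠ 0) :
    HasDerivAt (laplaceKernel n l) ((n / r - l) * laplaceKernel n l r) r := by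
  have hr' : (r : ℂ) ≠ 0 := Complex.ofReal_ne_zero.2 hr
  have hderiv : HasDerivAt (fun z : ℂ => z ^ n * Complex.exp (-(l * z)))
      ((n / r - l) * laplaceKernel n l r) r := by
    refine ((hasDerivAt_pow n (r : ℂ)).mul
      (((hasDerivAt_id (r : ℂ)).const_mul l).neg.cexp)).congr_deriv ?_
    cases n with
    | zero => simp [laplaceKernel, mul_comm]
    | succ n =>
      simp only [laplaceKernel, id, Nat.add_sub_cancel, Pi.neg_apply]
      field_simp
      ring
  exact hderiv.comp_ofReal

lemma integrableOn_pow_mul_exp_neg_mul (n : ℕ) {a : ℝ} (ha : 0 < a) :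
    IntegrableOn (fun r : ℝ => r ^ n * Real.exp (-(a * r))) (Ioi 0) := by
  have hn : (-1 : ℝ) < n := neg_one_lt_zero.trans_le n.cast_nonneg
  simpa using integrableOn_rpow_mul_exp_neg_mul_rpow (p := 1) hn one_pos ha

lemma integral_pow_mul_exp_neg_mul (n : ℕ) {a : ℝ} (ha : 0 < a) :
    ∫ r in Ioi (0 : ℝ), r ^ n * Real.exp (-(a * r)) = n.factorial / a ^ (n + 1) := by
  have h := Real.integral_rpow_mul_exp_neg_mul_Ioi (a := n + 1) (by positivity) ha
  simp only [Real.Gamma_nat_eq_factorial, add_sub_cancel_right, Real.rpow_natCast] at h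
  rw [h, ← Nat.cast_add_one, Real.rpow_natCast, one_div, inv_pow, inv_mul_eq_div]

lemma integrableOn_laplaceKernel (n : ℕ) {l : ℂ} (hl : 0 < l.re) :
    IntegrableOn (laplaceKernel n l) (Ioi 0) := by
  refine (integrableOn_pow_mul_exp_neg_mul n hl).mono'
    (continuous_laplaceKernel n l).aestronglyMeasurable ?_
  filter_upwards [ae_restrict_mem measurableSet_Ioi] with r hr
  exact (norm_laplaceKernel n l (le_of_lt hr)).le

lemma integral_norm_laplaceKernel (n : ℕ) {l : ℂ} (hl : 0 < l.re) :
    ∫ r in Ioi (0 : ℝ), ‖laplaceKernel n l r‖ = n.factorial / l.re ^ (n + 1) := by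
  rw [← integral_pow_mul_exp_neg_mul n hl]
  exact setIntegral_congr_fun measurableSet_Ioi fun r hr => norm_laplaceKernel n l (le_of_lt hr)

lemma norm_laplaceKernel_sub_le (n : ℕ) {l m : ℂ} (hlm : l.re = m.re) {r : ℝ} (hr : 0 ≤ r) :
    ‖laplaceKernel n l r - laplaceKernel n m r‖ ≤ ‖l - m‖ * ‖laplaceKernel (n + 1) m r‖ := by
  have him : l - m = ((l.im - m.im : ℝ) : ℂ) * Complex.I := by
    apply Complex.ext <;> simp [hlm]
  have hfactor : laplaceKernel n l r - laplaceKernel n m r =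
      (Complex.exp (Complex.I * ((-((l.im - m.im) * r) : ℝ) : ℂ)) - 1) * laplaceKernel n m r := by
    have hexp : -(l * r) = Complex.I * ((-((l.im - m.im) * r) : ℝ) : ℂ) + -(m * r) := by
      push_cast at him ⊢
      linear_combination -(r : ℂ) * him
    simp only [laplaceKernel]
    rw [hexp, Complex.exp_add]
    ring
  have hosc : ‖Complex.exp (Complex.I * ((-((l.im - m.im) * r) : ℝ) : ℂ)) - 1‖ ≤
      ‖l - m‖ * r := by
    refine Real.norm_exp_I_mul_ofReal_sub_one_le.trans_eq ?_
    rw [him, norm_neg, norm_mul, norm_mul, Complex.norm_I, mul_one, Complex.norm_real,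
      Real.norm_of_nonneg hr]
  calc ‖laplaceKernel n l r - laplaceKernel n m r‖
      ≤ ‖l - m‖ * r * ‖laplaceKernel n m r‖ := by rw [hfactor, norm_mul]; gcongr
    _ = ‖l - m‖ * ‖laplaceKernel (n + 1) m r‖ := by
      rw [norm_laplaceKernel n m hr, norm_laplaceKernel (n + 1) m hr]
      ring

end Kernel

namespace IsC0Semigroup

variable {X : Type u} [NormedAddCommGroup X] [NormedSpace ℂ X] {T : ℝ → X →L[ℂ] X} {M : ℝ}

section Orbit

lemma map_add_apply (hT : IsC0Semigroup T) {s t : ℝ} (hs : 0 ≤ s) (ht : 0 ≤ t) (x : X) :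
    T (s + t) x = T s (T t x) := by
  rw [hT.2.1 s t hs ht, ContinuousLinearMap.comp_apply]

lemma norm_apply_sub_apply_le (hT : IsC0Semigroup T) (hM : ∀ t : ℝ, 0 ≤ t → ‖T t‖ ≤ M) (x : X)
    {s t : ℝ} (hs : 0 ≤ s) (ht : 0 ≤ t) : ‖T t x - T s x‖ ≤ M * ‖T |t - s| x - x‖ := by
  wlog hst : s ≤ t generalizing s t
  · rw [norm_sub_rev, abs_sub_comm]
    exact this ht hs (le_of_not_ge hst)
  have hfactor : T t x - T s x = T s (T |t - s| x - x) := by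
    rw [map_sub, ← hT.map_add_apply hs (abs_nonneg _), abs_of_nonneg (sub_nonneg.2 hst),
      add_sub_cancel]
  exact hfactor ▸ (T s).le_of_opNorm_le (hM s hs) _

lemma continuousOn_orbit (hT : IsC0Semigroup T) (hM : ∀ t : ℝ, 0 ≤ t → ‖T t‖ ≤ M) (x : X) :
    ContinuousOn (fun r : ℝ => T r x) (Ici 0) := by
  have hzero : Tendsto (fun r => T r x) (𝓝[≥] 0) (𝓝 x) := by
    rw [← Ioi_insert, nhdsWithin_insert, tendsto_sup, tendsto_pure_left]
    exact ⟨fun s hs => by simpa [hT.1] using mem_of_mem_nhds hs, hT.2.2 x⟩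
  have habs (s : ℝ) : Tendsto (fun r : ℝ => |r - s|) (𝓝[Ici 0] s) (𝓝[≥] 0) := by
    refine tendsto_nhdsWithin_iff.2 ⟨?_, Eventually.of_forall fun _ => mem_Ici.2 (abs_nonneg _)⟩
    have hcont : Continuous fun r : ℝ => |r - s| := by fun_prop
    simpa using (hcont.tendsto s).mono_left nhdsWithin_le_nhds
  intro s hs
  have hbound : Tendsto (fun r => M * ‖T |r - s| x - x‖) (𝓝[Ici 0] s) (𝓝 0) := by
    simpa using (tendsto_iff_norm_sub_tendsto_zero.1 (hzero.comp (habs s))).const_mul M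
  refine tendsto_iff_norm_sub_tendsto_zero.2
    (squeeze_zero' (Eventually.of_forall fun _ => norm_nonneg _) ?_ hbound)
  filter_upwards [self_mem_nhdsWithin] with r hr
  exact hT.norm_apply_sub_apply_le hM x hs hr

end Orbit

section Phillips

variable {k k' : ℝ → ℂ}

lemma norm_smul_orbit_le (hM : ∀ t : ℝ, 0 ≤ t → ‖T t‖ ≤ M) (k : ℝ → ℂ) (x : X) {r : ℝ}
    (hr : 0 ≤ r) : ‖k r • T r x‖ ≤ M * ‖x‖ * ‖k r‖ := by
  rw [norm_smul, mul_comm]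
  gcongr
  exact (T r).le_of_opNorm_le (hM r hr) x

lemma integrableOn_smul_orbit (hT : IsC0Semigroup T) (hM : ∀ t : ℝ, 0 ≤ t → ‖T t‖ ≤ M)
    (hk : IntegrableOn k (Ioi 0)) (x : X) : IntegrableOn (fun r => k r • T r x) (Ioi 0) := by
  refine (hk.norm.const_mul (M * ‖x‖)).mono' (hk.aestronglyMeasurable.smul ?_) ?_
  · exact ((hT.continuousOn_orbit hM x).mono Ioi_subset_Ici_self).aestronglyMeasurable
      measurableSet_Ioi
  · filter_upwards [ae_restrict_mem measurableSet_Ioi] with r hr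
    exact norm_smul_orbit_le hM k x (le_of_lt hr)

lemma norm_integral_smul_orbit_le (hM : ∀ t : ℝ, 0 ≤ t → ‖T t‖ ≤ M)
    (hk : IntegrableOn k (Ioi 0)) (x : X) :
    ‖∫ r in Ioi (0 : ℝ), k r • T r x‖ ≤ M * (∫ r in Ioi (0 : ℝ), ‖k r‖) * ‖x‖ := by
  rw [mul_right_comm, ← integral_const_mul]
  refine norm_integral_le_of_norm_le (hk.norm.const_mul (M * ‖x‖)) ?_
  filter_upwards [ae_restrict_mem measurableSet_Ioi] with r hr
  exact norm_smul_orbit_le hM k x (le_of_lt hr)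

variable (hT : IsC0Semigroup T) (hM : ∀ t : ℝ, 0 ≤ t → ‖T t‖ ≤ M)

/-- The Hille–Phillips functional calculus of a bounded semigroup: the operator
`x ↦ ∫₀^∞ k(r) T(r)x dr` attached to an integrable kernel `k`. The integral is taken pointwise in
`x` because `r ↦ T r` need not be measurable in operator norm. -/
noncomputable def phillips (hk : IntegrableOn k (Ioi 0)) : X →L[ℂ] X :=
  LinearMap.mkContinuous
    { toFun := fun x => ∫ r in Ioi (0 : ℝ), k r • T r x
      map_add' := fun x y => by
        simp only [map_add, smul_add]
        exact integral_add (hT.integrableOn_smul_orbit hM hk x)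
          (hT.integrableOn_smul_orbit hM hk y)
      map_smul' := fun c x => by
        simp only [map_smul, smul_comm _ c, integral_smul, RingHom.id_apply] }
    (M * ∫ r in Ioi (0 : ℝ), ‖k r‖) (norm_integral_smul_orbit_le hM hk)

lemma phillips_apply (hk : IntegrableOn k (Ioi 0)) (x : X) :
    hT.phillips hM hk x = ∫ r in Ioi (0 : ℝ), k r • T r x :=
  rfl

lemma norm_phillips_le (hk : IntegrableOn k (Ioi 0)) :
    ‖hT.phillips hM hk‖ ≤ M * ∫ r in Ioi (0 : ℝ), ‖k r‖ :=
  LinearMap.mkContinuous_norm_le _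
    (mul_nonneg ((norm_nonneg _).trans (hM 0 le_rfl)) (integral_nonneg fun _ => norm_nonneg _)) _

lemma phillips_sub (hk : IntegrableOn k (Ioi 0)) (hk' : IntegrableOn k' (Ioi 0)) :
    hT.phillips hM (hk.sub hk') = hT.phillips hM hk - hT.phillips hM hk' := by
  ext x
  simp only [sub_apply, phillips_apply, Pi.sub_apply, sub_smul]
  exact integral_sub (hT.integrableOn_smul_orbit hM hk x) (hT.integrableOn_smul_orbit hM hk' x)

end Phillips

section LaplaceMoment

variable (hT : IsC0Semigroup T) (hM : ∀ t : ℝ, 0 ≤ t → ‖T t‖ ≤ M) {l m : ℂ}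

/-- The `n`-th moment `x ↦ ∫₀^∞ rⁿ e^{-lr} T(r)x dr` of the Laplace transform of the semigroup.
For `n = 0` it is the resolvent at `l` of the generator. -/
noncomputable def laplaceMoment (n : ℕ) (hl : 0 < l.re) : X →L[ℂ] X :=
  hT.phillips hM (integrableOn_laplaceKernel n hl)

lemma laplaceMoment_apply (n : ℕ) (hl : 0 < l.re) (x : X) :
    hT.laplaceMoment hM n hl x = ∫ r in Ioi (0 : ℝ), laplaceKernel n l r • T r x :=
  rfl

lemma norm_laplaceMoment_le (n : ℕ) (hl : 0 < l.re) :
    ‖hT.laplaceMoment hM n hl‖ ≤ M * (n.factorial / l.re ^ (n + 1)) :=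
  (hT.norm_phillips_le hM _).trans_eq (by rw [integral_norm_laplaceKernel n hl])

lemma norm_laplaceMoment_sub_le (n : ℕ) (hl : 0 < l.re) (hm : 0 < m.re)
    (hlm : l.re = m.re) :
    ‖hT.laplaceMoment hM n hl - hT.laplaceMoment hM n hm‖ ≤
      M * ((n + 1).factorial / m.re ^ (n + 2)) * ‖l - m‖ := by
  have hM₀ : 0 ≤ M := (norm_nonneg _).trans (hM 0 le_rfl)
  have hkernel : ∫ r in Ioi (0 : ℝ), ‖laplaceKernel n l r - laplaceKernel n m r‖ ≤
      ‖l - m‖ * ((n + 1).factorial / m.re ^ (n + 2)) := by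
    rw [← integral_norm_laplaceKernel (n + 1) hm, ← integral_const_mul]
    exact setIntegral_mono_on
      ((integrableOn_laplaceKernel n hl).sub (integrableOn_laplaceKernel n hm)).norm
      ((integrableOn_laplaceKernel (n + 1) hm).norm.const_mul _) measurableSet_Ioi
      fun r hr => norm_laplaceKernel_sub_le n hlm (le_of_lt hr)
  rw [laplaceMoment, laplaceMoment, ← phillips_sub, mul_assoc, mul_comm (_ / _)]
  exact (hT.norm_phillips_le hM _).trans (mul_le_mul_of_nonneg_left hkernel hM₀)

-- Both sides are the tail `∫_r^∞ e^{-lu} T(u)x du` of the Laplace integral.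
lemma exp_smul_apply_laplaceMoment_zero [CompleteSpace X] (hl : 0 < l.re) {r : ℝ} (hr : 0 ≤ r)
    (x : X) : Complex.exp (-(l * r)) • T r (hT.laplaceMoment hM 0 hl x) =
      hT.laplaceMoment hM 0 hl x - ∫ u in (0 : ℝ)..r, laplaceKernel 0 l u • T u x := by
  have hint := hT.integrableOn_smul_orbit hM (integrableOn_laplaceKernel 0 hl) x
  have htail : Complex.exp (-(l * r)) • T r (hT.laplaceMoment hM 0 hl x) =
      ∫ u in Ioi r, laplaceKernel 0 l u • T u x := by
    have hshift := (measurePreserving_add_right volume r).setIntegral_preimage_emb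
      (measurableEmbedding_addRight r) (fun u => laplaceKernel 0 l u • T u x) (Ioi r)
    rw [preimage_add_const_Ioi, sub_self] at hshift
    rw [laplaceMoment_apply, ← ContinuousLinearMap.integral_comp_comm _ hint, ← integral_smul,
      ← hshift]
    refine setIntegral_congr_fun measurableSet_Ioi fun u hu => ?_
    simp only [map_smul, smul_smul, add_comm u r, hT.map_add_apply hr (le_of_lt hu),
      laplaceKernel, pow_zero, one_mul, ← Complex.exp_add, Complex.ofReal_add, mul_add, neg_add]
  rw [htail, eq_sub_iff_add_eq, add_comm, laplaceMoment_apply]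
  exact intervalIntegral.integral_interval_add_Ioi hint (hint.mono_set (Ioi_subset_Ioi hr))

lemma hasDerivAt_exp_smul_apply_laplaceMoment_zero [CompleteSpace X] (hl : 0 < l.re) {r : ℝ}
    (hr : 0 < r) (x : X) :
    HasDerivAt (fun u : ℝ => Complex.exp (-(l * u)) • T u (hT.laplaceMoment hM 0 hl x))
      (-(laplaceKernel 0 l r • T r x)) r := by
  have hint := hT.integrableOn_smul_orbit hM (integrableOn_laplaceKernel 0 hl) x
  have hcont : ContinuousOn (fun u => laplaceKernel 0 l u • T u x) (Ioi 0) :=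
    (continuous_laplaceKernel 0 l).continuousOn.smul
      ((hT.continuousOn_orbit hM x).mono Ioi_subset_Ici_self)
  have hprim : HasDerivAt (fun u => ∫ v in (0 : ℝ)..u, laplaceKernel 0 l v • T v x)
      (laplaceKernel 0 l r • T r x) r :=
    intervalIntegral.integral_hasDerivAt_right
      ((intervalIntegrable_iff_integrableOn_Ioc_of_le hr.le).2 (hint.mono_set Ioc_subset_Ioi_self))
      (hcont.stronglyMeasurableAtFilter isOpen_Ioi r hr) (hcont.continuousAt (Ioi_mem_nhds hr))
  refine (hprim.const_sub (hT.laplaceMoment hM 0 hl x)).congr_of_eventuallyEq ?_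
  filter_upwards [Ioi_mem_nhds hr] with u hu
  exact hT.exp_smul_apply_laplaceMoment_zero hM hl (le_of_lt hu) x

-- The two sides differ by the integral of the derivative of `r ↦ rⁿ⁺¹ e^{-lr} T(r) R(l)x`.
lemma laplaceMoment_succ [CompleteSpace X] (n : ℕ) (hl : 0 < l.re) :
    hT.laplaceMoment hM (n + 1) hl =
      (n + 1 : ℂ) • (hT.laplaceMoment hM n hl * hT.laplaceMoment hM 0 hl) := by
  ext x
  set z := hT.laplaceMoment hM 0 hl x with hz
  have hint (k : ℕ) (y : X) := hT.integrableOn_smul_orbit hM (integrableOn_laplaceKernel k hl) y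
  have hderiv : ∀ r ∈ Ioi (0 : ℝ), HasDerivAt (fun r => laplaceKernel (n + 1) l r • T r z)
      ((n + 1 : ℂ) • laplaceKernel n l r • T r z - laplaceKernel (n + 1) l r • T r x) r := by
    intro r hr
    have hpow : HasDerivAt (fun r : ℝ => (r : ℂ) ^ (n + 1)) ((n + 1 : ℂ) * (r : ℂ) ^ n) r := by
      simpa using (hasDerivAt_pow (n + 1) (r : ℂ)).comp_ofReal
    have hprod := hpow.smul (hT.hasDerivAt_exp_smul_apply_laplaceMoment_zero hM hl hr x)
    convert hprod using 1
    · ext u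
      simp only [laplaceKernel, mul_smul, Pi.smul_apply', hz]
    · simp only [laplaceKernel, mul_smul, smul_neg, pow_zero, one_smul, hz]
      abel
  have hint₁ : IntegrableOn (fun r => (n + 1 : ℂ) • laplaceKernel n l r • T r z) (Ioi 0) :=
    (hint n z).smul _
  have hint' := hint₁.sub (hint (n + 1) x)
  have hlim := tendsto_zero_of_hasDerivAt_of_integrableOn_Ioi hderiv hint' (hint (n + 1) z)
  have hcont : ContinuousWithinAt (fun r => laplaceKernel (n + 1) l r • T r z) (Ici 0) 0 :=
    (continuous_laplaceKernel (n + 1) l).continuousWithinAt.smul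
      (hT.continuousOn_orbit hM z 0 self_mem_Ici)
  have hftc := integral_Ioi_of_hasDerivAt_of_tendsto hcont hderiv hint' hlim
  have hboundary : laplaceKernel (n + 1) l 0 = 0 := by simp [laplaceKernel]
  rw [integral_sub hint₁ (hint (n + 1) x), integral_smul, hboundary,
    zero_smul, sub_zero, sub_eq_zero] at hftc
  exact hftc.symm

lemma laplaceMoment_eq_factorial_smul_pow [CompleteSpace X] (n : ℕ) (hl : 0 < l.re) :
    hT.laplaceMoment hM n hl = (n.factorial : ℂ) • hT.laplaceMoment hM 0 hl ^ (n + 1) := by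
  induction n with
  | zero => simp
  | succ n ih =>
    rw [laplaceMoment_succ, ih, smul_mul_assoc, smul_smul, ← pow_succ, Nat.factorial_succ]
    push_cast
    rfl

end LaplaceMoment

section ResolventBound

variable {ε : ℝ}

lemma mul_norm_le_norm_add_smul_apply {S : X →L[ℂ] X} (hε : 0 ≤ ε) (hS : ‖S - 1‖ ≤ 2 - ε) {q : ℝ}
    (hq₀ : 0 ≤ q) (hq₁ : q ≤ 1) (v : X) : ε / 2 * ‖v‖ ≤ ‖v + (q : ℂ) • S v‖ := by
  have hdecomp : (((1 + q : ℝ) : ℂ)) • v = v + (q : ℂ) • S v - (q : ℂ) • (S - 1) v := by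
    simp only [sub_apply, one_apply_eq_self]
    push_cast
    module
  have hbound : (1 + q) * ‖v‖ ≤ ‖v + (q : ℂ) • S v‖ + q * ((2 - ε) * ‖v‖) := by
    calc (1 + q) * ‖v‖ = ‖(((1 + q : ℝ) : ℂ)) • v‖ := by
          rw [norm_smul, Complex.norm_real, Real.norm_of_nonneg (by positivity)]
      _ ≤ ‖v + (q : ℂ) • S v‖ + ‖(q : ℂ) • (S - 1) v‖ := hdecomp ▸ norm_sub_le _ _
      _ ≤ ‖v + (q : ℂ) • S v‖ + q * ((2 - ε) * ‖v‖) := by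
          rw [norm_smul, Complex.norm_real, Real.norm_of_nonneg hq₀]
          gcongr
          exact (S - 1).le_of_opNorm_le hS v
  have hε₂ : 0 ≤ 2 - ε := (norm_nonneg _).trans hS
  have hcoeff : ε / 2 ≤ 1 + q - q * (2 - ε) := by nlinarith
  nlinarith [mul_le_mul_of_nonneg_right hcoeff (norm_nonneg v)]

lemma exp_neg_mul_pi_div_abs_im {l : ℂ} (hl : l.im ≠ 0) :
    Complex.exp (-(l * (π / |l.im| : ℝ))) = -(Real.exp (-(l.re * (π / |l.im|))) : ℂ) := by
  set τ := π / |l.im| with hτ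
  have hsplit : -(l * τ) = ((-(l.re * τ) : ℝ) : ℂ) + (-(l.im * τ) : ℝ) * Complex.I := by
    apply Complex.ext <;> simp
  have hphase : Complex.exp ((-(l.im * τ) : ℝ) * Complex.I) = -1 := by
    rcases hl.lt_or_gt with hneg | hpos
    · have hangle : -(l.im * τ) = π := by rw [hτ, abs_of_neg hneg]; field_simp
      rw [hangle, Complex.exp_pi_mul_I]
    · have hangle : -(l.im * τ) = -π := by rw [hτ, abs_of_pos hpos]; field_simp
      rw [hangle, Complex.ofReal_neg, neg_mul, Complex.exp_neg_pi_mul_I]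
  rw [hsplit, Complex.exp_add, hphase, Complex.ofReal_exp, mul_neg_one]

lemma norm_intervalIntegral_laplaceKernel_zero_smul_le (hM : ∀ t : ℝ, 0 ≤ t → ‖T t‖ ≤ M) {l : ℂ}
    (hl : 0 ≤ l.re) {τ : ℝ} (hτ : 0 ≤ τ) (x : X) :
    ‖∫ r in (0 : ℝ)..τ, laplaceKernel 0 l r • T r x‖ ≤ M * ‖x‖ * τ := by
  have hM₀ : 0 ≤ M := (norm_nonneg _).trans (hM 0 le_rfl)
  have hbound : ∀ r ∈ uIoc 0 τ, ‖laplaceKernel 0 l r • T r x‖ ≤ M * ‖x‖ := by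
    intro r hr
    have hr₀ : 0 ≤ r := (uIoc_of_le hτ ▸ hr).1.le
    have hker : ‖laplaceKernel 0 l r‖ ≤ 1 := by
      rw [norm_laplaceKernel 0 l hr₀, pow_zero, one_mul, Real.exp_le_one_iff]
      exact neg_nonpos.2 (mul_nonneg hl hr₀)
    exact (norm_smul_orbit_le hM _ x hr₀).trans (mul_le_of_le_one_right (by positivity) hker)
  simpa [abs_of_nonneg hτ] using intervalIntegral.norm_integral_le_of_norm_le_const hbound

/-- The resolvent `R(l)` of the generator satisfies `|Im l| ‖R(l)‖ ≤ K` on the open right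
half-plane. For a bounded semigroup this is the resolvent estimate behind analyticity. -/
def HasResolventBound (hT : IsC0Semigroup T) (hM : ∀ t : ℝ, 0 ≤ t → ‖T t‖ ≤ M) (K : ℝ) : Prop :=
  ∀ ⦃l : ℂ⦄ (hl : 0 < l.re), |l.im| * ‖hT.laplaceMoment hM 0 hl‖ ≤ K

lemma hasResolventBound_of_norm_sub_one_le [CompleteSpace X] (hT : IsC0Semigroup T)
    (hM : ∀ t : ℝ, 0 ≤ t → ‖T t‖ ≤ M) (hε : 0 < ε) (h : ∀ t : ℝ, 0 < t → ‖T t - 1‖ ≤ 2 - ε) :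
    hT.HasResolventBound hM (2 * π * M / ε) := by
  intro l hl
  have hM₀ : 0 ≤ M := (norm_nonneg _).trans (hM 0 le_rfl)
  rcases eq_or_ne l.im 0 with him | him
  · rw [him, abs_zero, zero_mul]
    positivity
  have him' : 0 < |l.im| := abs_pos.2 him
  set τ := π / |l.im| with hτ
  have hτ₀ : 0 < τ := by positivity
  rw [mul_comm, ← le_div_iff₀ him']
  refine ContinuousLinearMap.opNorm_le_bound _ (by positivity) fun x => ?_
  set v := hT.laplaceMoment hM 0 hl x
  set q := Real.exp (-(l.re * τ))
  have hsplit : v + (q : ℂ) • T τ v = ∫ r in (0 : ℝ)..τ, laplaceKernel 0 l r • T r x := by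
    have htail := hT.exp_smul_apply_laplaceMoment_zero hM hl hτ₀.le x
    rw [exp_neg_mul_pi_div_abs_im him, neg_smul] at htail
    rw [← sub_neg_eq_add, htail, sub_sub_cancel]
  have hq₁ : q ≤ 1 := Real.exp_le_one_iff.2 (neg_nonpos.2 (by positivity))
  have hv : ε / 2 * ‖v‖ ≤ M * ‖x‖ * τ :=
    (mul_norm_le_norm_add_smul_apply hε.le (h τ hτ₀) (Real.exp_nonneg _) hq₁ v).trans
      (hsplit ▸ norm_intervalIntegral_laplaceKernel_zero_smul_le hM hl.le hτ₀.le x)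
  calc ‖v‖ = 2 / ε * (ε / 2 * ‖v‖) := by field_simp
    _ ≤ 2 / ε * (M * ‖x‖ * τ) := by gcongr
    _ = 2 * π * M / ε / |l.im| * ‖x‖ := by rw [hτ]; ring

end ResolventBound

section VerticalLine

variable (hT : IsC0Semigroup T) (hM : ∀ t : ℝ, 0 ≤ t → ‖T t‖ ≤ M) {K a : ℝ}

-- The second moment is `2 R(l)³`, so the bound on `R(l)` gives the case `j = 3`; the trivial bound
-- is the case `j = 0`.
lemma pow_mul_norm_laplaceMoment_two_le [CompleteSpace X] (hM₁ : 1 ≤ M) (hK : 0 < K)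
    (hR : hT.HasResolventBound hM K) {l : ℂ} (hl : 0 < l.re) {j : ℕ} (hj : j ≤ 3) :
    (|l.im| / (K * l.re)) ^ j * ‖hT.laplaceMoment hM 2 hl‖ ≤ 2 * M / l.re ^ 3 := by
  set R := hT.laplaceMoment hM 0 hl
  have htrivial : ‖hT.laplaceMoment hM 2 hl‖ ≤ 2 * M / l.re ^ 3 :=
    (hT.norm_laplaceMoment_le hM 2 hl).trans_eq (by simp [Nat.factorial]; ring)
  have hcube : ‖hT.laplaceMoment hM 2 hl‖ ≤ 2 * ‖R‖ ^ 3 := by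
    rw [laplaceMoment_eq_factorial_smul_pow, norm_smul]
    simpa [Nat.factorial] using norm_pow_le' R three_pos
  refine pow_mul_le_of_exponent_le (by positivity) (norm_nonneg _) htrivial ?_ hj
  calc (|l.im| / (K * l.re)) ^ 3 * ‖hT.laplaceMoment hM 2 hl‖
      ≤ (|l.im| / (K * l.re)) ^ 3 * (2 * ‖R‖ ^ 3) := by gcongr
    _ = 2 * (|l.im| * ‖R‖) ^ 3 / (K * l.re) ^ 3 := by ring
    _ ≤ 2 * K ^ 3 / (K * l.re) ^ 3 := by gcongr; exact hR hl
    _ = 2 * 1 / l.re ^ 3 := by field_simp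
    _ ≤ 2 * M / l.re ^ 3 := by gcongr

/-- The moment `∫₀^∞ rⁿ e^{-lr} T(r)x dr` on the vertical line `Re l = a`, as a function of the
frequency `w`, where `l = a + 2πiw`. This is the normalization of Mathlib's Fourier transform. -/
noncomputable def lineMoment (n : ℕ) (ha : 0 < a) (w : ℝ) : X →L[ℂ] X :=
  hT.laplaceMoment hM n (l := ⟨a, 2 * π * w⟩) ha

lemma continuous_lineMoment (n : ℕ) (ha : 0 < a) : Continuous (hT.lineMoment hM n ha) := by
  refine (LipschitzWith.of_dist_le'
    (K := M * ((n + 1).factorial / a ^ (n + 2)) * (2 * π)) fun v w => ?_).continuous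
  have hdist : ‖(⟨a, 2 * π * v⟩ - ⟨a, 2 * π * w⟩ : ℂ)‖ = 2 * π * dist v w := by
    have him : (⟨a, 2 * π * v⟩ - ⟨a, 2 * π * w⟩ : ℂ) = ((2 * π * (v - w) : ℝ) : ℂ) * Complex.I := by
      apply Complex.ext <;> simp [mul_sub]
    rw [him, norm_mul, Complex.norm_I, mul_one, Complex.norm_real, norm_mul,
      Real.norm_of_nonneg (by positivity), Real.dist_eq, Real.norm_eq_abs]
  rw [mul_assoc, ← hdist, dist_eq_norm]
  exact hT.norm_laplaceMoment_sub_le hM n ha ha rfl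

lemma norm_lineMoment_two_le [CompleteSpace X] (hM₁ : 1 ≤ M) (hK : 0 < K)
    (hR : hT.HasResolventBound hM K) (ha : 0 < a) (w : ℝ) :
    ‖hT.lineMoment hM 2 ha w‖ ≤
      4 * M / a ^ 3 * (1 + (2 * π / (K * a) * w) ^ 2)⁻¹ := by
  have hpow (j : ℕ) (hj : j ≤ 3) :=
    hT.pow_mul_norm_laplaceMoment_two_le hM hM₁ hK hR (l := ⟨a, 2 * π * w⟩) ha hj
  have h0 := hpow 0 (by norm_num)
  have h2 := hpow 2 (by norm_num)
  rw [div_pow, sq_abs, ← div_pow] at h2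
  rw [← div_eq_mul_inv, le_div_iff₀ (by positivity), lineMoment]
  have hfreq : 2 * π / (K * a) * w = 2 * π * w / (K * a) := by ring
  rw [hfreq]
  linear_combination h0 + h2

lemma norm_smul_lineMoment_two_le [CompleteSpace X] (hM₁ : 1 ≤ M) (hK : 0 < K)
    (hR : hT.HasResolventBound hM K) (ha : 0 < a) (w : ℝ) :
    ‖(2 * π * Complex.I * w) • hT.lineMoment hM 2 ha w‖ ≤
      4 * K * M / a ^ 2 * (1 + (2 * π / (K * a) * w) ^ 2)⁻¹ := by
  have hpow (j : ℕ) (hj : j ≤ 3) :=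
    hT.pow_mul_norm_laplaceMoment_two_le hM hM₁ hK hR (l := ⟨a, 2 * π * w⟩) ha hj
  set x := |2 * π * w| / (K * a) with hx
  have hfreq : (2 * π / (K * a) * w) ^ 2 = x ^ 2 := by
    rw [hx, div_pow, sq_abs]
    ring
  have hnorm : ‖(2 * π * Complex.I * w : ℂ)‖ = K * a * x := by
    rw [hx, abs_mul, abs_of_pos Real.two_pi_pos, mul_div_cancel₀ _ (by positivity)]
    simp [abs_of_pos Real.pi_pos]
  rw [← div_eq_mul_inv, le_div_iff₀ (by positivity), norm_smul, hnorm, hfreq, lineMoment]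
  set F := hT.laplaceMoment hM 2 (l := ⟨a, 2 * π * w⟩) ha
  calc K * a * x * ‖F‖ * (1 + x ^ 2) = K * a * (x ^ 1 * ‖F‖ + x ^ 3 * ‖F‖) := by ring
    _ ≤ K * a * (2 * M / a ^ 3 + 2 * M / a ^ 3) := by
      gcongr
      · exact hpow 1 (by norm_num)
      · exact hpow 3 (by norm_num)
    _ = 4 * K * M / a ^ 2 := by field_simp; ring

lemma integrable_lineMoment_two [CompleteSpace X] (hM₁ : 1 ≤ M) (hK : 0 < K)
    (hR : hT.HasResolventBound hM K) (ha : 0 < a) : Integrable (hT.lineMoment hM 2 ha) :=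
  ((integrable_inv_one_add_sq.comp_mul_left' (by positivity)).const_mul _).mono'
    (hT.continuous_lineMoment hM 2 ha).aestronglyMeasurable
    (Eventually.of_forall (hT.norm_lineMoment_two_le hM hM₁ hK hR ha))

lemma integrable_smul_lineMoment_two [CompleteSpace X] (hM₁ : 1 ≤ M) (hK : 0 < K)
    (hR : hT.HasResolventBound hM K) (ha : 0 < a) :
    Integrable fun w : ℝ => (2 * π * Complex.I * w) • hT.lineMoment hM 2 ha w := by
  have hcont : Continuous fun w : ℝ => (2 * π * Complex.I * w) • hT.lineMoment hM 2 ha w :=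
    (by fun_prop : Continuous fun w : ℝ => (2 * π * Complex.I * w : ℂ)).smul
      (hT.continuous_lineMoment hM 2 ha)
  exact ((integrable_inv_one_add_sq.comp_mul_left' (by positivity)).const_mul _).mono'
    hcont.aestronglyMeasurable
    (Eventually.of_forall (hT.norm_smul_lineMoment_two_le hM hM₁ hK hR ha))

lemma integral_norm_smul_lineMoment_two_le [CompleteSpace X] (hM₁ : 1 ≤ M) (hK : 0 < K)
    (hR : hT.HasResolventBound hM K) (ha : 0 < a) :
    ∫ w : ℝ, ‖(2 * π * Complex.I * w) • hT.lineMoment hM 2 ha w‖ ≤ 2 * K ^ 2 * M / a := by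
  have hc : 0 < 2 * π / (K * a) := by positivity
  calc ∫ w : ℝ, ‖(2 * π * Complex.I * w) • hT.lineMoment hM 2 ha w‖
      ≤ ∫ w : ℝ, 4 * K * M / a ^ 2 * (1 + (2 * π / (K * a) * w) ^ 2)⁻¹ :=
        integral_mono (hT.integrable_smul_lineMoment_two hM hM₁ hK hR ha).norm
          ((integrable_inv_one_add_sq.comp_mul_left' hc.ne').const_mul _)
          (hT.norm_smul_lineMoment_two_le hM hM₁ hK hR ha)
    _ = 4 * K * M / a ^ 2 * ((2 * π / (K * a))⁻¹ * π) := by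
        rw [integral_const_mul, Measure.integral_comp_mul_left (fun w => (1 + w ^ 2)⁻¹),
          integral_univ_inv_one_add_sq, abs_of_pos (inv_pos.2 hc), smul_eq_mul]
    _ = 2 * K ^ 2 * M / a := by field_simp; ring

end VerticalLine

section FourierInversion

variable (hT : IsC0Semigroup T) (hM : ∀ t : ℝ, 0 ≤ t → ‖T t‖ ≤ M) {K a : ℝ}

lemma fourier_indicator_smul_orbit (n : ℕ) (ha : 0 < a) (x : X) (w : ℝ) :
    𝓕 ((Ioi 0).indicator fun r : ℝ => laplaceKernel n a r • T r x) w =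
      hT.lineMoment hM n ha w x := by
  rw [Real.fourier_real_eq_integral_exp_smul, lineMoment, laplaceMoment_apply,
    ← integral_indicator measurableSet_Ioi]
  refine integral_congr_ae (Eventually.of_forall fun r => ?_)
  have hl : (⟨a, 2 * π * w⟩ : ℂ) = a + 2 * π * w * Complex.I := by
    apply Complex.ext <;> simp
  by_cases hr : r ∈ Ioi (0 : ℝ)
  · simp only [indicator_of_mem hr]
    rw [smul_smul, laplaceKernel, laplaceKernel, mul_left_comm, ← Complex.exp_add, hl]
    congr 3
    push_cast
    ring
  · simp only [indicator_of_notMem hr, smul_zero]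

lemma fourierInv_lineMoment [CompleteSpace X] {n : ℕ} (ha : 0 < a)
    (hint : Integrable (hT.lineMoment hM n ha)) {t : ℝ} (ht : 0 < t) :
    𝓕⁻ (hT.lineMoment hM n ha) t = laplaceKernel n a t • T t := by
  ext x
  set f : ℝ → X := (Ioi 0).indicator fun r : ℝ => laplaceKernel n a r • T r x
  have hf : Integrable f := (integrable_indicator_iff measurableSet_Ioi).2
    (hT.integrableOn_smul_orbit hM (integrableOn_laplaceKernel n (l := a) ha) x)
  have hFf : 𝓕 f = fun w => hT.lineMoment hM n ha w x :=
    funext (hT.fourier_indicator_smul_orbit hM n ha x)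
  have hfIoi : EqOn f (fun r => laplaceKernel n a r • T r x) (Ioi 0) := eqOn_indicator
  have hcont : ContinuousAt f t := by
    have horbit : ContinuousAt (fun r => laplaceKernel n a r • T r x) t :=
      (continuous_laplaceKernel n a).continuousAt.smul
        ((hT.continuousOn_orbit hM x).continuousAt (Ici_mem_nhds ht))
    exact horbit.congr (hfIoi.eventuallyEq_of_mem (Ioi_mem_nhds ht)).symm
  have hinv := hf.fourierInv_fourier_eq (hFf ▸ hint.apply_continuousLinearMap x) hcont
  rw [fourierInv_continuousLinearMap_apply hint, ← hFf, hinv, hfIoi ht]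
  rfl

lemma exists_hasDerivAt_of_hasResolventBound [CompleteSpace X] (hM₁ : 1 ≤ M) (hK : 0 < K)
    (hR : hT.HasResolventBound hM K) {t : ℝ} (ht : 0 < t) :
    ∃ D : X →L[ℂ] X, HasDerivAt T D t ∧ ‖(t : ℂ) • D‖ ≤ M + 2 * Real.exp 1 * K ^ 2 * M := by
  have ha : 0 < t⁻¹ := inv_pos.2 ht
  set L := hT.lineMoment hM 2 ha
  set c : ℝ → ℂ := fun s => (laplaceKernel 2 (t⁻¹ : ℝ) s)⁻¹
  set D : X →L[ℂ] X := 𝓕⁻ (fun w : ℝ => (2 * π * Complex.I * w) • L w) t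
  have hL : Integrable L := hT.integrable_lineMoment_two hM hM₁ hK hR ha
  have hL' := hT.integrable_smul_lineMoment_two hM hM₁ hK hR ha
  have hTL : T =ᶠ[𝓝 t] fun s => c s • 𝓕⁻ L s := by
    filter_upwards [Ioi_mem_nhds ht] with s hs
    rw [hT.fourierInv_lineMoment hM ha hL hs, inv_smul_smul₀ (laplaceKernel_ne_zero 2 _ hs.ne')]
  have hc : HasDerivAt c (-(t⁻¹ : ℂ) * c t) t := by
    have hk := laplaceKernel_ne_zero 2 (t⁻¹ : ℝ) ht.ne'
    refine ((hasDerivAt_laplaceKernel 2 (t⁻¹ : ℝ) ht.ne').inv hk).congr_deriv ?_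
    simp only [c]
    push_cast
    field_simp
    ring
  have hderiv : HasDerivAt T (c t • D - (t⁻¹ : ℂ) • T t) t := by
    refine (hc.smul (hasDerivAt_fourierInv hL hL' t)).congr_of_eventuallyEq hTL |>.congr_deriv ?_
    rw [hTL.self_of_nhds, smul_smul, neg_mul, neg_smul, sub_eq_add_neg]
  refine ⟨_, hderiv, ?_⟩
  have hD : ‖D‖ ≤ 2 * K ^ 2 * M * t :=
    (norm_fourierInv_le_integral_norm _ t).trans
      ((hT.integral_norm_smul_lineMoment_two_le hM hM₁ hK hR ha).trans_eq (by rw [div_inv_eq_mul]))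
  have hct : ‖c t‖ = Real.exp 1 / t ^ 2 := by
    rw [norm_inv, norm_laplaceKernel 2 _ ht.le, Complex.ofReal_re, inv_mul_cancel₀ ht.ne',
      Real.exp_neg]
    field_simp
  have ht' : (t : ℂ) ≠ 0 := Complex.ofReal_ne_zero.2 ht.ne'
  calc ‖(t : ℂ) • (c t • D - (t⁻¹ : ℂ) • T t)‖ = ‖(t * c t) • D - T t‖ := by
        rw [smul_sub, smul_smul, smul_smul, mul_inv_cancel₀ ht', one_smul]
    _ ≤ t * (Real.exp 1 / t ^ 2) * (2 * K ^ 2 * M * t) + M := by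
        refine (norm_sub_le _ _).trans (add_le_add ?_ (hM t ht.le))
        rw [norm_smul, norm_mul, Complex.norm_real, Real.norm_of_nonneg ht.le, hct]
        gcongr
    _ = M + 2 * Real.exp 1 * K ^ 2 * M := by field_simp; ring

end FourierInversion

end IsC0Semigroup

lemma eight_mul_exp_one_mul_pi_sq_le : 8 * Real.exp 1 * π ^ 2 ≤ 216 := by
  have he := Real.exp_one_lt_d9
  have hpi : π ^ 2 ≤ 3.142 ^ 2 :=
    pow_le_pow_left₀ Real.pi_pos.le (by linarith [Real.pi_lt_d4]) 2
  nlinarith [Real.exp_pos 1]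

lemma one_le_four_mul_one_add_log {x : ℝ} (hx : 1 / 2 ≤ x) : 1 ≤ 4 * (1 + Real.log x) := by
  have hlog : -Real.log 2 ≤ Real.log x := by
    rw [← Real.log_inv, ← one_div]
    exact Real.log_le_log (by norm_num) hx
  linarith [Real.log_two_lt_d9]

lemma cube_div_sq_le_mul_one_add_log {M ε : ℝ} (hM : 1 ≤ M) (hε : 0 < ε) (hε₂ : ε ≤ 2) :
    M ^ 3 / ε ^ 2 ≤ 4 * (M ^ 4 / ε ^ 2) * (1 + Real.log (M / ε)) := by
  have hlog : 1 ≤ 4 * (1 + Real.log (M / ε)) :=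
    one_le_four_mul_one_add_log ((div_le_div_iff₀ two_pos hε).2 (by linarith))
  calc M ^ 3 / ε ^ 2 ≤ M ^ 4 / ε ^ 2 := by gcongr; norm_num
    _ ≤ M ^ 4 / ε ^ 2 * (4 * (1 + Real.log (M / ε))) := le_mul_of_one_le_right (by positivity) hlog
    _ = 4 * (M ^ 4 / ε ^ 2) * (1 + Real.log (M / ε)) := by ring

theorem stmt5_general {X : Type u} [NormedAddCommGroup X] [NormedSpace ℂ X] [CompleteSpace X]
    {T : ℝ → X →L[ℂ] X} (hT : IsC0Semigroup T) {M : ℝ} (hM₁ : 1 ≤ M)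
    (hM : ∀ t : ℝ, 0 ≤ t → ‖T t‖ ≤ M) {ε : ℝ} (hε : 0 < ε)
    (h : ∀ t : ℝ, 0 < t → ‖T t - 1‖ ≤ 2 - ε) :
    ∃ T' : ℝ → X →L[ℂ] X, (∀ t : ℝ, 0 < t → HasDerivAt (fun s : ℝ => T s) (T' t) t) ∧
      ∀ t : ℝ, 0 < t → ‖(t : ℂ) • T' t‖ ≤ 220 * (M ^ 3 / ε ^ 2) := by
  have hR := hT.hasResolventBound_of_norm_sub_one_le hM hε h
  have hderiv (t : ℝ) (ht : 0 < t) :=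
    hT.exists_hasDerivAt_of_hasResolventBound hM hM₁ (by positivity) hR ht
  choose! T' hT' hbound using hderiv
  refine ⟨T', hT', fun t ht => (hbound t ht).trans ?_⟩
  have hε₂ : ε ≤ 2 := by linarith [(norm_nonneg _).trans (h 1 one_pos)]
  have hM_le : M ≤ 4 * (M ^ 3 / ε ^ 2) := by
    rw [← mul_div_assoc, le_div_iff₀ (by positivity)]
    calc M * ε ^ 2 ≤ M * 2 ^ 2 := by gcongr
      _ = 4 * M ^ 1 := by ring
      _ ≤ 4 * M ^ 3 := by gcongr; norm_num
  calc M + 2 * Real.exp 1 * (2 * π * M / ε) ^ 2 * M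
      = M + 8 * Real.exp 1 * π ^ 2 * (M ^ 3 / ε ^ 2) := by ring
    _ ≤ 4 * (M ^ 3 / ε ^ 2) + 216 * (M ^ 3 / ε ^ 2) := by
        gcongr
        exact eight_mul_exp_one_mul_pi_sq_le
    _ = 220 * (M ^ 3 / ε ^ 2) := by ring

/-- Quantitative bound on `sup_{t>0} ‖t T'(t)‖`: there is a universal constant
`c > 0` such that any `C₀`-semigroup with `‖T t‖ ≤ M` (`M ≥ 1`) and
`‖T t - I‖ ≤ 2 - ε` for all `t > 0` (with `0 < ε ≤ 2`) is differentiable in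
operator norm on `(0, ∞)`, with `‖t T'(t)‖ ≤ c · (M⁴/ε²) · (1 + log (M/ε))`. -/
theorem stmt5 :
    ∃ c : ℝ, 0 < c ∧
      ∀ (X : Type u) [NormedAddCommGroup X] [NormedSpace ℂ X] [CompleteSpace X]
        (T : ℝ → X →L[ℂ] X), IsC0Semigroup T →
      ∀ M : ℝ, 1 ≤ M → (∀ t : ℝ, 0 ≤ t → ‖T t‖ ≤ M) →
      ∀ ε : ℝ, 0 < ε → ε ≤ 2 →
      (∀ t : ℝ, 0 < t → ‖T t - 1‖ ≤ 2 - ε) →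
      ∃ T' : ℝ → X →L[ℂ] X,
        (∀ t : ℝ, 0 < t → HasDerivAt (fun s : ℝ => T s) (T' t) t) ∧
        ∀ t : ℝ, 0 < t → ‖(t : ℂ) • T' t‖ ≤ c * (M ^ 4 / ε ^ 2) * (1 + Real.log (M / ε)) := by
  refine ⟨880, by norm_num, fun X _ _ _ T hT M hM₁ hM ε hε hε₂ h => ?_⟩
  obtain ⟨T', hT', hbound⟩ := stmt5_general hT hM₁ hM hε h
  exact ⟨T', hT', fun t ht => (hbound t ht).trans <| by
    linear_combination 220 * cube_div_sq_le_mul_one_add_log hM₁ hε hε₂⟩
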